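/- For every s ∈ H₀(ℂ), the truncated integrals over balls converge to the p-adic open string N-point zeta function: lim_{r→∞} ∫_{B_r^{N−3}∖Λ} ∏_{i=2}^{N−2} |x_i|_p^{s_{1i}} |1−x_i|_p^{s_{(N−1)i}} ∏_{2≤i<j≤N−2} |x_i−x_j|_p^{s_{ij}} ∏ dx_i = Z^{(N)}(s), where B_r^{N−3} = { x ∈ ℚ_p^{N−3} : max_i |x_i|_p ≤ p^r }. -/

import Mathlib

open MeasureTheory Finset

noncomputable section

instance padicMS (p : ℕ) [Fact p.Prime] : MeasurableSpace ℚ_[p] := borel _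
instance padicBS (p : ℕ) [Fact p.Prime] : BorelSpace ℚ_[p] := ⟨rfl⟩

/-- The closed unit ball of `ℚ_[p]` (i.e. `ℤ_[p]`) as a positive compact subset. -/
def padicBall (p : ℕ) [Fact p.Prime] : TopologicalSpace.PositiveCompacts ℚ_[p] where
  carrier := Metric.closedBall 0 1
  isCompact' := isCompact_closedBall 0 1
  interior_nonempty' := ⟨0, Metric.ball_subset_interior_closedBall (Metric.mem_ball_self one_pos)⟩

/-- The Haar measure on `(ℚ_[p], +)`, normalized so that `ℤ_[p]` has measure `1`. -/
def padicHaar (p : ℕ) [Fact p.Prime] : Measure ℚ_[p] :=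
  Measure.addHaarMeasure (padicBall p)

instance padicHaarSF (p : ℕ) [Fact p.Prime] : SigmaFinite (padicHaar p) := by
  unfold padicHaar; infer_instance

/-- The product of normalized Haar measures on a finite power of `ℚ_[p]`. -/
def padicPi (p : ℕ) [Fact p.Prime] (ι : Type) [Fintype ι] : Measure (ι → ℚ_[p]) :=
  Measure.pi fun _ => padicHaar p

/-- `T = {2, …, N-2}`. -/
def Tset (N : ℕ) : Finset ℕ := Finset.Icc 2 (N - 2)

/-- The ordered pairs `(i, j)` with `i < j` and `i, j ∈ A`. -/
def pairsIn (A : Finset ℕ) : Finset (ℕ × ℕ) := (A ×ˢ A).filter fun q => q.1 < q.2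

/-- The coordinates of a point of `ℚ_p^A`, as a function on `ℕ` (junk value `0` off `A`). -/
def padicCoord {p : ℕ} [Fact p.Prime] {A : Finset ℕ} (x : A → ℚ_[p]) (n : ℕ) : ℚ_[p] :=
  if h : n ∈ A then x ⟨n, h⟩ else 0

/-- The complement of the divisor `Λ` in `ℚ_p^{N-3}` (the domain of the Koba–Nielsen
integrand). -/
def ZNset (p N : ℕ) [Fact p.Prime] : Set (↥(Tset N) → ℚ_[p]) :=
  {x | (∀ i, x i ≠ 0 ∧ x i ≠ 1) ∧
    ∀ q ∈ pairsIn (Tset N), padicCoord x q.1 ≠ padicCoord x q.2}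

/-- The Koba–Nielsen integrand
`∏ |x_i|^{s_{1i}} |1-x_i|^{s_{(N-1)i}} ∏ |x_i-x_j|^{s_{ij}}`. -/
def ZNintegrand (p N : ℕ) [Fact p.Prime] (s : ℕ → ℕ → ℂ) (x : ↥(Tset N) → ℚ_[p]) : ℂ :=
  (∏ i ∈ Tset N,
    (‖padicCoord x i‖ : ℂ) ^ s 1 i * (‖1 - padicCoord x i‖ : ℂ) ^ s (N - 1) i) *
  ∏ q ∈ pairsIn (Tset N), (‖padicCoord x q.1 - padicCoord x q.2‖ : ℂ) ^ s q.1 q.2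

/-- The conditions `C1'`–`C4'` defining `H₀(ℂ)`. -/
def H0C (N : ℕ) (s : ℕ → ℕ → ℂ) : Prop :=
  (∀ J ⊆ Tset N, J.Nonempty →
    (J.card : ℝ) + (∑ i ∈ J, ((s 1 i).re + (s (N - 1) i).re)) +
      (∑ q ∈ (pairsIn (Tset N)).filter (fun q => q.1 ∈ J), (s q.1 q.2).re) +
      (∑ q ∈ (pairsIn (Tset N)).filter (fun q => q.1 ∉ J ∧ q.2 ∈ J), (s q.1 q.2).re) < 0) ∧
  (∀ J ⊆ Tset N, 2 ≤ J.card →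
    (0 : ℝ) < (J.card : ℝ) - 1 + ∑ q ∈ pairsIn J, (s q.1 q.2).re) ∧
  (∀ t ∈ ({1, N - 1} : Finset ℕ), ∀ J ⊆ Tset N, ∀ S ⊆ J, (2 ≤ J.card ∨ 1 ≤ S.card) →
    (0 : ℝ) < (J.card : ℝ) + (∑ i ∈ S, (s t i).re) + ∑ q ∈ pairsIn J, (s q.1 q.2).re) ∧
  ((∀ i ∈ Tset N, -1 < (s 1 i).re ∧ -1 < (s (N - 1) i).re) ∧
    ∀ q ∈ pairsIn (Tset N), -1 < (s q.1 q.2).re)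

section Pairs

@[to_additive]
theorem prod_pairsIn_eq {M : Type*} [CommMonoid M] (g : ℕ → ℕ → M) (A : Finset ℕ) :
    ∏ q ∈ pairsIn A, g q.1 q.2 = ∏ i ∈ A, ∏ j ∈ A, if i < j then g i j else 1 := by
  rw [pairsIn, Finset.prod_filter, Finset.prod_product]

@[to_additive]
theorem prod_pairsIn_insert {M : Type*} [CommMonoid M] {g : ℕ → ℕ → M}
    (hg : ∀ i j, g i j = g j i) {a : ℕ} {J : Finset ℕ} (ha : a ∉ J) :
    ∏ q ∈ pairsIn (insert a J), g q.1 q.2 =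
      (∏ j ∈ J, g a j) * ∏ q ∈ pairsIn J, g q.1 q.2 := by
  simp only [prod_pairsIn_eq, Finset.prod_insert ha, lt_irrefl, if_false, one_mul,
    Finset.prod_mul_distrib]
  rw [← mul_assoc, ← Finset.prod_mul_distrib]
  congr 1
  refine Finset.prod_congr rfl fun j hj => ?_
  have hne : a ≠ j := fun h => ha (h ▸ hj)
  rcases lt_or_gt_of_ne hne with h | h
  · simp [h, h.not_gt]
  · simp [h, h.not_gt, hg a j]

@[to_additive]
theorem prod_pairsIn_union {M : Type*} [CommMonoid M] {g : ℕ → ℕ → M}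
    (hg : ∀ i j, g i j = g j i) {K L : Finset ℕ} (hKL : Disjoint K L) :
    ∏ q ∈ pairsIn (K ∪ L), g q.1 q.2 =
      (∏ q ∈ pairsIn K, g q.1 q.2) * (∏ q ∈ pairsIn L, g q.1 q.2) *
        ∏ i ∈ L, ∏ j ∈ K, g i j := by
  induction L using Finset.induction_on with
  | empty => simp [pairsIn]
  | insert a L ha ih =>
    rw [Finset.disjoint_insert_right] at hKL
    have haKL : a ∉ K ∪ L := by simp [hKL.1, ha]
    rw [Finset.union_insert, prod_pairsIn_insert hg haKL, ih hKL.2, prod_pairsIn_insert hg ha,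
      Finset.prod_insert ha, Finset.prod_union hKL.2]
    simp only [mul_assoc, mul_comm, mul_left_comm]

theorem mem_of_mem_pairsIn {A : Finset ℕ} {q : ℕ × ℕ} (hq : q ∈ pairsIn A) :
    q.1 ∈ A ∧ q.2 ∈ A := by
  simp only [pairsIn, Finset.mem_filter, Finset.mem_product] at hq
  exact hq.1

theorem sum_pairsIn_touching (g : ℕ → ℕ → ℝ) {J A : Finset ℕ} :
    (∑ q ∈ (pairsIn A).filter (fun q => q.1 ∈ J), g q.1 q.2) +
      (∑ q ∈ (pairsIn A).filter (fun q => q.1 ∉ J ∧ q.2 ∈ J), g q.1 q.2) =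
    (∑ q ∈ pairsIn A, g q.1 q.2) - ∑ q ∈ pairsIn (A \ J), g q.1 q.2 := by
  have h : pairsIn (A \ J) = (pairsIn A).filter (fun q => q.1 ∉ J ∧ q.2 ∉ J) := by
    ext q
    simp only [pairsIn, Finset.mem_filter, Finset.mem_product, Finset.mem_sdiff]
    tauto
  rw [h, eq_sub_iff_add_eq, Finset.sum_filter, Finset.sum_filter, Finset.sum_filter,
    ← Finset.sum_add_distrib, ← Finset.sum_add_distrib]
  refine Finset.sum_congr rfl fun q _ => ?_
  by_cases h1 : q.1 ∈ J <;> by_cases h2 : q.2 ∈ J <;> simp [h1, h2]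

end Pairs

section Haar

variable {p : ℕ} [Fact p.Prime]

instance isAddHaarMeasure_padicHaar : (padicHaar p).IsAddHaarMeasure := by
  unfold padicHaar; infer_instance

theorem padicHaar_closedBall : padicHaar p (Metric.closedBall 0 1) = 1 :=
  Measure.addHaarMeasure_self (K₀ := padicBall p)

theorem closedBall_eq_iUnion_ball :
    Metric.closedBall (0 : ℚ_[p]) 1 = ⋃ n ∈ Finset.range p, Metric.ball (n : ℚ_[p]) 1 := by
  ext z
  simp only [Set.mem_iUnion, Finset.mem_range, exists_prop, Metric.mem_ball,
    mem_closedBall_zero_iff, dist_eq_norm]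
  constructor
  · intro hz
    obtain ⟨n, hn, h⟩ := PadicInt.exists_mem_range (⟨z, hz⟩ : ℤ_[p])
    refine ⟨n, hn, ?_⟩
    exact PadicInt.mem_nonunits.1 h
  · rintro ⟨n, -, h⟩
    calc ‖z‖ = ‖(z - n) + n‖ := by ring_nf
      _ ≤ max ‖z - n‖ ‖(n : ℚ_[p])‖ := Padic.nonarchimedean _ _
      _ ≤ 1 := max_le h.le (by exact_mod_cast Padic.norm_int_le_one (p := p) n)

theorem padicHaar_ball : (p : ENNReal) * padicHaar p (Metric.ball 0 1) = 1 := by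
  have hdisj : Set.PairwiseDisjoint (Finset.range p : Set ℕ)
      (fun n : ℕ => Metric.ball (n : ℚ_[p]) 1) := by
    intro m hm n hn hmn
    refine Set.disjoint_left.2 fun z hzm hzn => hmn ?_
    have hlt : ‖((m - n : ℤ) : ℚ_[p])‖ < 1 := by
      rw [Metric.mem_ball, dist_eq_norm] at hzm hzn
      calc ‖((m - n : ℤ) : ℚ_[p])‖ = ‖(z - n) + -(z - m)‖ := by push_cast; ring_nf
        _ ≤ max ‖z - n‖ ‖-(z - m)‖ := Padic.nonarchimedean _ _
        _ < 1 := max_lt hzn (by rwa [norm_neg])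
    rw [Padic.norm_intCast_lt_one_iff] at hlt
    simp only [Finset.coe_range, Set.mem_Iio] at hm hn
    have := Int.eq_zero_of_abs_lt_dvd hlt (by rw [abs_lt]; constructor <;> omega)
    omega
  have h := measure_biUnion_finset (μ := padicHaar p) hdisj
    (fun _ _ => Metric.isOpen_ball.measurableSet)
  rw [← closedBall_eq_iUnion_ball, padicHaar_closedBall] at h
  have hb : ∀ n : ℕ, padicHaar p (Metric.ball (n : ℚ_[p]) 1) = padicHaar p (Metric.ball 0 1) := by
    intro n
    rw [Measure.addHaar_ball_center]
  simp only [hb, Finset.sum_const, Finset.card_range, nsmul_eq_mul] at h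
  exact h.symm

theorem map_inv_mul_padicHaar :
    (padicHaar p).map (fun x => (p : ℚ_[p])⁻¹ * x) = (p : ENNReal)⁻¹ • padicHaar p := by
  have hp0 : (p : ℚ_[p]) ≠ 0 := by exact_mod_cast (Fact.out : p.Prime).ne_zero
  have hm : Measurable (fun x : ℚ_[p] => (p : ℚ_[p])⁻¹ * x) := by fun_prop
  have hinv : ((padicHaar p).map (AddMonoidHom.mulLeft (p : ℚ_[p])⁻¹)).IsAddLeftInvariant :=
    isAddLeftInvariant_map (AddMonoidHom.mulLeft (p : ℚ_[p])⁻¹).toAddHom hm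
      fun y => ⟨p * y, by simp [hp0]⟩
  have hsf : SigmaFinite ((padicHaar p).map (AddMonoidHom.mulLeft (p : ℚ_[p])⁻¹)) :=
    (MeasurableEquiv.mulLeft₀ (p : ℚ_[p])⁻¹ (inv_ne_zero hp0)).sigmaFinite_map
  have h := Measure.addHaarMeasure_unique
    ((padicHaar p).map (AddMonoidHom.mulLeft (p : ℚ_[p])⁻¹)) (padicBall p)
  have hval : (padicHaar p).map (AddMonoidHom.mulLeft (p : ℚ_[p])⁻¹) (padicBall p) =
      (p : ENNReal)⁻¹ := by
    rw [Measure.map_apply (f := AddMonoidHom.mulLeft (p : ℚ_[p])⁻¹) hm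
      (padicBall p).isCompact.measurableSet]
    have : (AddMonoidHom.mulLeft (p : ℚ_[p])⁻¹) ⁻¹' (padicBall p) = Metric.ball 0 1 := by
      ext z
      have h := Padic.norm_le_pow_iff_norm_lt_pow_add_one z (-1)
      have hp : (0 : ℝ) < p := by exact_mod_cast (Fact.out : p.Prime).pos
      rw [zpow_neg_one, neg_add_cancel, zpow_zero] at h
      rw [mem_ball_zero_iff, ← h, Set.mem_preimage]
      change _ ∈ Metric.closedBall (0 : ℚ_[p]) 1 ↔ _
      rw [mem_closedBall_zero_iff, AddMonoidHom.coe_mulLeft, norm_mul, norm_inv, Padic.norm_p,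
        inv_inv, mul_comm, ← le_div_iff₀ hp, one_div]
    rw [this]
    exact ENNReal.eq_inv_of_mul_eq_one_left ((mul_comm _ _).trans padicHaar_ball)
  rw [hval] at h
  exact h

end Haar

section Lint

variable {p : ℕ} [Fact p.Prime]

/-- The integral of `f` over the coordinates in `J`, the other coordinates being `0`. -/
def coordLint (J : Finset ℕ) (f : (ℕ → ℚ_[p]) → ENNReal) : ENNReal :=
  ∫⁻ y : J → ℚ_[p], f (padicCoord y) ∂padicPi p J

theorem padicCoord_of_mem {J : Finset ℕ} (y : J → ℚ_[p]) {i : ℕ} (hi : i ∈ J) :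
    padicCoord y i = y ⟨i, hi⟩ := dif_pos hi

theorem padicCoord_of_notMem {J : Finset ℕ} (y : J → ℚ_[p]) {i : ℕ} (hi : i ∉ J) :
    padicCoord y i = 0 := dif_neg hi

theorem measurable_padicCoord (J : Finset ℕ) :
    Measurable (padicCoord : (J → ℚ_[p]) → ℕ → ℚ_[p]) := by
  refine measurable_pi_lambda _ fun n => ?_
  by_cases h : n ∈ J
  · simp only [padicCoord, h, dif_pos]
    exact measurable_pi_apply _
  · simp only [padicCoord, h, dif_neg, not_false_eq_true]
    exact measurable_const

instance sigmaFinite_padicPi (J : Finset ℕ) : SigmaFinite (padicPi p J) := by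
  unfold padicPi; infer_instance

instance isAddHaarMeasure_padicPi (J : Finset ℕ) : (padicPi p J).IsAddHaarMeasure := by
  unfold padicPi; infer_instance

theorem coordLint_mono {J : Finset ℕ} {f g : (ℕ → ℚ_[p]) → ENNReal} (h : ∀ x, f x ≤ g x) :
    coordLint J f ≤ coordLint J g :=
  lintegral_mono fun _ => h _

theorem coordLint_empty (f : (ℕ → ℚ_[p]) → ENNReal) : coordLint ∅ f = f 0 := by
  have h : ∀ y : (∅ : Finset ℕ) → ℚ_[p], padicCoord y = 0 := fun y => by
    ext n; exact padicCoord_of_notMem y (Finset.notMem_empty n)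
  simp [coordLint, h, padicPi]

theorem coordLint_sum {J : Finset ℕ} {κ : Type*} (s : Finset κ)
    {f : κ → (ℕ → ℚ_[p]) → ENNReal} (hf : ∀ k, Measurable (f k)) :
    coordLint J (fun x => ∑ k ∈ s, f k x) = ∑ k ∈ s, coordLint J (f k) :=
  lintegral_finsetSum s fun k _ => (hf k).comp (measurable_padicCoord J)

theorem coordLint_union {K L : Finset ℕ} (hKL : Disjoint K L)
    {f : (ℕ → ℚ_[p]) → ENNReal} (hf : Measurable f) :
    coordLint (K ∪ L) f =
      coordLint K fun x => coordLint L fun y => f fun i => if i ∈ K then x i else y i := by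
  have hmp := measurePreserving_piFinsetUnion (α := fun _ => ℚ_[p]) hKL (fun _ => padicHaar p)
  have hm : Measurable fun z : (K → ℚ_[p]) × (L → ℚ_[p]) =>
      f fun i => if i ∈ K then padicCoord z.1 i else padicCoord z.2 i := by
    refine hf.comp (measurable_pi_lambda _ fun i => ?_)
    split_ifs
    · exact (measurable_pi_apply i).comp ((measurable_padicCoord K).comp measurable_fst)
    · exact (measurable_pi_apply i).comp ((measurable_padicCoord L).comp measurable_snd)
  have h := hmp.lintegral_comp (f := fun y => f (padicCoord y))
    (hf.comp (measurable_padicCoord _))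
  unfold coordLint padicPi
  rw [← h, ← lintegral_prod (fun z : (K → ℚ_[p]) × (L → ℚ_[p]) =>
      f fun i => if i ∈ K then padicCoord z.1 i else padicCoord z.2 i) hm.aemeasurable]
  refine lintegral_congr fun z => congrArg f (funext fun i => ?_)
  by_cases hK : i ∈ K
  · rw [if_pos hK, padicCoord_of_mem _ (Finset.mem_union_left L hK), padicCoord_of_mem _ hK]
    exact Equiv.piFinsetUnion_left (fun _ => ℚ_[p]) hKL hK _
  · rw [if_neg hK]
    by_cases hL : i ∈ L
    · rw [padicCoord_of_mem _ (Finset.mem_union_right K hL), padicCoord_of_mem _ hL]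
      exact Equiv.piFinsetUnion_right (fun _ => ℚ_[p]) hKL hL _
    · rw [padicCoord_of_notMem _ (by simp [hK, hL]), padicCoord_of_notMem _ hL]

theorem coordLint_const_mul {J : Finset ℕ} (c : ENNReal) {f : (ℕ → ℚ_[p]) → ENNReal}
    (hf : Measurable f) : coordLint J (fun x => c * f x) = c * coordLint J f :=
  lintegral_const_mul c (hf.comp (measurable_padicCoord J))

theorem coordLint_mul_of_disjoint {K L : Finset ℕ} (hKL : Disjoint K L)
    {f g : (ℕ → ℚ_[p]) → ENNReal} (hf : Measurable f) (hg : Measurable g)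
    (hfK : DependsOn f (K : Set ℕ)) (hgL : DependsOn g (L : Set ℕ)) :
    coordLint (K ∪ L) (fun x => f x * g x) = coordLint K f * coordLint L g := by
  rw [coordLint_union hKL (f := fun x => f x * g x) (hf.mul hg), mul_comm,
    ← coordLint_const_mul _ hf]
  refine congrArg _ (funext fun x => ?_)
  rw [mul_comm, ← coordLint_const_mul _ hg]
  refine congrArg _ (funext fun y => ?_)
  congr 1
  · exact hfK fun i hi => if_pos hi
  · exact hgL fun i hi => if_neg (Finset.disjoint_right.1 hKL hi)

theorem map_inv_smul_padicPi (J : Finset ℕ) :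
    (padicPi p J).map (fun y => (p : ℚ_[p])⁻¹ • y) = ((p : ENNReal)⁻¹) ^ J.card • padicPi p J := by
  have hsf : SigmaFinite ((padicHaar p).map (fun x => (p : ℚ_[p])⁻¹ * x)) := by
    have : IsFiniteMeasureOnCompacts ((p : ENNReal)⁻¹ • padicHaar p) :=
      (inferInstance : IsFiniteMeasureOnCompacts (padicHaar p)).smul _ (by
        simp [(Fact.out : p.Prime).ne_zero])
    rw [map_inv_mul_padicHaar]
    infer_instance
  have h := Measure.pi_map_pi (μ := fun _ : J => padicHaar p)
    (f := fun (_ : J) (x : ℚ_[p]) => (p : ℚ_[p])⁻¹ * x)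
    (fun _ => Measurable.aemeasurable (by fun_prop))
  refine h.trans (Measure.pi_eq fun s _ => ?_)
  simp [map_inv_mul_padicHaar, padicPi, Finset.prod_mul_distrib]

/-- Scaling property of the product Haar measures. -/
def ScalesHaar (b : ℚ_[p]) : Prop :=
  ∀ (J : Finset ℕ) (f : (ℕ → ℚ_[p]) → ENNReal), Measurable f →
    coordLint J (fun x => f (b • x)) = ENNReal.ofReal (‖b‖⁻¹) ^ J.card * coordLint J f

theorem padicCoord_smul {J : Finset ℕ} (b : ℚ_[p]) (y : J → ℚ_[p]) :
    padicCoord (b • y) = b • padicCoord y := by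
  ext n
  by_cases h : n ∈ J <;> simp [padicCoord, h]

theorem scalesHaar_inv : ScalesHaar (p : ℚ_[p])⁻¹ := by
  intro J f hf
  have h : Measurable (fun y : J → ℚ_[p] => (p : ℚ_[p])⁻¹ • y) := by fun_prop
  simp only [coordLint, ← padicCoord_smul]
  rw [← lintegral_map (f := fun y => f (padicCoord y)) (hf.comp (measurable_padicCoord J)) h,
    map_inv_smul_padicPi, lintegral_smul_measure]
  have hp : (0 : ℝ) < p := by exact_mod_cast (Fact.out : p.Prime).pos
  simp [ENNReal.ofReal_inv_of_pos hp]

theorem scalesHaar_natCast : ScalesHaar (p : ℚ_[p]) := by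
  intro J f hf
  have hp0 : (p : ℚ_[p]) ≠ 0 := by exact_mod_cast (Fact.out : p.Prime).ne_zero
  have h := scalesHaar_inv (p := p) J (fun x => f ((p : ℚ_[p]) • x)) (by fun_prop)
  simp only [smul_inv_smul₀ hp0] at h
  rw [h, ← mul_assoc, ← mul_pow, ← ENNReal.ofReal_mul (by positivity), norm_inv,
    inv_inv, inv_mul_cancel₀ (norm_ne_zero_iff.2 hp0)]
  simp

theorem ScalesHaar.iterate {b : ℚ_[p]} (hb : ScalesHaar b) (k : ℕ) (J : Finset ℕ)
    {f : (ℕ → ℚ_[p]) → ENNReal} (hf : Measurable f) :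
    coordLint J (fun x => f (b ^ k • x)) =
      (ENNReal.ofReal (‖b‖⁻¹) ^ J.card) ^ k * coordLint J f := by
  induction k with
  | zero => simp
  | succ k ih =>
    have h := hb J (fun x => f (b ^ k • x)) (by fun_prop)
    simp only [smul_smul, ← pow_succ] at h
    rw [h, ih, pow_succ', mul_assoc]

theorem coordLint_one_sub (J : Finset ℕ) {f : (ℕ → ℚ_[p]) → ENNReal} (hf : Measurable f)
    (hfJ : DependsOn f (J : Set ℕ)) :
    coordLint J (fun x => f (1 - x)) = coordLint J f := by
  have h := (Measure.measurePreserving_sub_left (padicPi p J) 1).lintegral_comp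
    (hf.comp (measurable_padicCoord J))
  unfold coordLint
  refine Eq.trans (lintegral_congr fun y => hfJ fun i hi => ?_) h
  simp [padicCoord_of_mem _ hi]

theorem coordLint_insert {a : ℕ} {J : Finset ℕ} (ha : a ∉ J)
    {f : (ℕ → ℚ_[p]) → ENNReal} (hf : Measurable f)
    (hfJ : DependsOn f (insert a J : Finset ℕ)) :
    coordLint (insert a J) f =
      coordLint {a} fun x => coordLint J fun y =>
        f fun i => if i = a then x a else y i + x a := by
  rw [Finset.insert_eq, coordLint_union (Finset.disjoint_singleton_left.2 ha) hf]
  refine congrArg _ (funext fun x => ?_)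
  have hm : Measurable fun y : J → ℚ_[p] =>
      f fun i => if i ∈ ({a} : Finset ℕ) then x i else padicCoord y i := by
    refine hf.comp (measurable_pi_lambda _ fun i => ?_)
    split_ifs
    · exact measurable_const
    · exact (measurable_pi_apply i).comp (measurable_padicCoord J)
  have h := (measurePreserving_add_right (padicPi p J) (fun _ => x a)).lintegral_comp hm
  refine h.symm.trans (lintegral_congr fun y => hfJ fun i hi => ?_)
  rcases Finset.mem_insert.1 (Finset.mem_coe.1 hi) with rfl | hi
  · simp
  · have hne : i ≠ a := fun h => ha (h ▸ hi)
    simp [hne, padicCoord_of_mem _ hi]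

end Lint

section Weights

variable {p : ℕ} [Fact p.Prime]

open Classical in
/-- `‖z‖ ^ e` as an extended nonnegative real, with the value `0` at `z = 0`. -/
def normPow (z : ℚ_[p]) (e : ℝ) : ENNReal := if z = 0 then 0 else ENNReal.ofReal (‖z‖ ^ e)

@[fun_prop]
theorem measurable_normPow (e : ℝ) : Measurable fun z : ℚ_[p] => normPow z e :=
  Measurable.ite (measurableSet_singleton 0) measurable_const
    (measurable_norm.pow_const e).ennreal_ofReal

theorem normPow_of_ne_zero {z : ℚ_[p]} (hz : z ≠ 0) (e : ℝ) :
    normPow z e = ENNReal.ofReal (‖z‖ ^ e) := if_neg hz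

theorem normPow_zero_left (e : ℝ) : normPow (0 : ℚ_[p]) e = 0 := if_pos rfl

theorem normPow_congr {z w : ℚ_[p]} (h : ‖z‖ = ‖w‖) (e : ℝ) : normPow z e = normPow w e := by
  have h0 : z = 0 ↔ w = 0 := by rw [← norm_eq_zero, h, norm_eq_zero]
  by_cases hz : z = 0
  · rw [hz, h0.1 hz]
  · rw [normPow_of_ne_zero hz, normPow_of_ne_zero (mt h0.2 hz), h]

theorem normPow_of_norm_eq_one {z : ℚ_[p]} (h : ‖z‖ = 1) (e : ℝ) : normPow z e = 1 := by
  have hz : z ≠ 0 := norm_ne_zero_iff.1 (by simp [h])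
  simp [normPow_of_ne_zero hz, h]

theorem normPow_mul {b : ℚ_[p]} (hb : b ≠ 0) (z : ℚ_[p]) (e : ℝ) :
    normPow (b * z) e = ENNReal.ofReal (‖b‖ ^ e) * normPow z e := by
  by_cases hz : z = 0
  · simp [hz, normPow_zero_left]
  · rw [normPow_of_ne_zero (mul_ne_zero hb hz), normPow_of_ne_zero hz, norm_mul,
      Real.mul_rpow (norm_nonneg _) (norm_nonneg _), ENNReal.ofReal_mul (by positivity)]

theorem normPow_add (z : ℚ_[p]) (e e' : ℝ) :
    normPow z (e + e') = normPow z e * normPow z e' := by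
  by_cases hz : z = 0
  · simp [hz, normPow_zero_left]
  · rw [normPow_of_ne_zero hz, normPow_of_ne_zero hz, normPow_of_ne_zero hz,
      Real.rpow_add (norm_pos_iff.2 hz), ENNReal.ofReal_mul (by positivity)]

theorem normPow_sum {z : ℚ_[p]} (hz : z ≠ 0) (s : Finset ℕ) (e : ℕ → ℝ) :
    normPow z (∑ j ∈ s, e j) = ∏ j ∈ s, normPow z (e j) := by
  induction s using Finset.induction_on with
  | empty => simp [normPow_of_ne_zero hz]
  | insert j s hj ih => rw [Finset.sum_insert hj, Finset.prod_insert hj, normPow_add, ih]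

theorem prod_ofReal_rpow {κ : Type*} {r : ℝ} (hr : 0 < r) (s : Finset κ) (e : κ → ℝ) :
    ∏ i ∈ s, ENNReal.ofReal (r ^ e i) = ENNReal.ofReal (r ^ ∑ i ∈ s, e i) := by
  rw [← ENNReal.ofReal_prod_of_nonneg fun i _ => by positivity, Real.rpow_sum_of_pos hr]

/-- The product of the factors `‖x i‖ ^ e i` for `i ∈ J`. -/
def pointWt (e : ℕ → ℝ) (J : Finset ℕ) (x : ℕ → ℚ_[p]) : ENNReal :=
  ∏ i ∈ J, normPow (x i) (e i)

/-- The product of the factors `‖x i - x j‖ ^ a i j` for `i < j` in `J`. -/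
def pairWt (a : ℕ → ℕ → ℝ) (J : Finset ℕ) (x : ℕ → ℚ_[p]) : ENNReal :=
  ∏ q ∈ pairsIn J, normPow (x q.1 - x q.2) (a q.1 q.2)

/-- The indicator function of the points whose coordinates in `J` all lie in `U`. -/
def boxInd (U : Set ℚ_[p]) (J : Finset ℕ) (x : ℕ → ℚ_[p]) : ENNReal :=
  ∏ i ∈ J, U.indicator 1 (x i)

@[fun_prop]
theorem measurable_pointWt (e : ℕ → ℝ) (J : Finset ℕ) :
    Measurable (pointWt (p := p) e J) := by
  unfold pointWt; fun_prop

@[fun_prop]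
theorem measurable_pairWt (a : ℕ → ℕ → ℝ) (J : Finset ℕ) :
    Measurable (pairWt (p := p) a J) := by
  unfold pairWt
  exact Finset.measurable_prod _ fun q _ => (measurable_normPow _).comp
    ((measurable_pi_apply q.1).sub (measurable_pi_apply q.2))

theorem measurable_boxInd {U : Set ℚ_[p]} (hU : MeasurableSet U) (J : Finset ℕ) :
    Measurable (boxInd U J) :=
  Finset.measurable_prod _ fun i _ =>
    (measurable_one.indicator hU).comp (measurable_pi_apply i)

theorem dependsOn_pointWt (e : ℕ → ℝ) (J : Finset ℕ) :
    DependsOn (pointWt (p := p) e J) (J : Set ℕ) := fun x y h =>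
  Finset.prod_congr rfl fun i hi => by rw [h i hi]

theorem dependsOn_pairWt (a : ℕ → ℕ → ℝ) (J : Finset ℕ) :
    DependsOn (pairWt (p := p) a J) (J : Set ℕ) := fun x y h =>
  Finset.prod_congr rfl fun q hq => by
    rw [h _ (mem_of_mem_pairsIn hq).1, h _ (mem_of_mem_pairsIn hq).2]

theorem dependsOn_boxInd (U : Set ℚ_[p]) (J : Finset ℕ) :
    DependsOn (boxInd U J) (J : Set ℕ) := fun x y h =>
  Finset.prod_congr rfl fun i hi => by rw [h i hi]

theorem dependsOn_mul {f g : (ℕ → ℚ_[p]) → ENNReal} {s : Set ℕ} (hf : DependsOn f s)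
    (hg : DependsOn g s) : DependsOn (fun x => f x * g x) s := fun x y h => by
  simp only [hf h, hg h]

theorem boxInd_eq_one {U : Set ℚ_[p]} {J : Finset ℕ} {x : ℕ → ℚ_[p]} (h : ∀ i ∈ J, x i ∈ U) :
    boxInd U J x = 1 :=
  Finset.prod_eq_one fun i hi => by simp [h i hi]

theorem boxInd_eq_zero {U : Set ℚ_[p]} {J : Finset ℕ} {x : ℕ → ℚ_[p]} {i : ℕ} (hi : i ∈ J)
    (h : x i ∉ U) : boxInd U J x = 0 :=
  Finset.prod_eq_zero hi (by simp [h])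

theorem boxInd_union_le (U V : Set ℚ_[p]) (J : Finset ℕ) (x : ℕ → ℚ_[p]) :
    boxInd (U ∪ V) J x ≤ ∑ K ∈ J.powerset, boxInd U K x * boxInd V (J \ K) x := by
  unfold boxInd
  rw [← Finset.prod_add]
  refine Finset.prod_le_prod' fun i _ => ?_
  by_cases hU : x i ∈ U <;> by_cases hV : x i ∈ V <;> simp [hU, hV]

theorem pointWt_smul {b : ℚ_[p]} (hb : b ≠ 0) (e : ℕ → ℝ) (J : Finset ℕ) (x : ℕ → ℚ_[p]) :
    pointWt e J (b • x) = ENNReal.ofReal (‖b‖ ^ ∑ i ∈ J, e i) * pointWt e J x := by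
  rw [← prod_ofReal_rpow (norm_pos_iff.2 hb), pointWt, pointWt, ← Finset.prod_mul_distrib]
  exact Finset.prod_congr rfl fun i _ => normPow_mul hb _ _

theorem pairWt_smul {b : ℚ_[p]} (hb : b ≠ 0) (a : ℕ → ℕ → ℝ) (J : Finset ℕ)
    (x : ℕ → ℚ_[p]) :
    pairWt a J (b • x) = ENNReal.ofReal (‖b‖ ^ ∑ q ∈ pairsIn J, a q.1 q.2) * pairWt a J x := by
  rw [← prod_ofReal_rpow (norm_pos_iff.2 hb), pairWt, pairWt, ← Finset.prod_mul_distrib]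
  refine Finset.prod_congr rfl fun q _ => ?_
  rw [← normPow_mul hb, mul_sub]
  rfl

theorem normPow_sub_comm {a : ℕ → ℕ → ℝ} (ha : ∀ i j, a i j = a j i) (x : ℕ → ℚ_[p])
    (i j : ℕ) : normPow (x i - x j) (a i j) = normPow (x j - x i) (a j i) := by
  rw [ha i j]
  exact normPow_congr (norm_sub_rev _ _) _

theorem pointWt_sdiff {K J : Finset ℕ} (hK : K ⊆ J) (e : ℕ → ℝ) (x : ℕ → ℚ_[p]) :
    pointWt e J x = pointWt e K x * pointWt e (J \ K) x := by
  rw [mul_comm]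
  exact (Finset.prod_sdiff hK).symm

theorem pairWt_sdiff {a : ℕ → ℕ → ℝ} (ha : ∀ i j, a i j = a j i) {K J : Finset ℕ}
    (hK : K ⊆ J) (x : ℕ → ℚ_[p]) :
    pairWt a J x = pairWt a K x * pairWt a (J \ K) x *
      ∏ i ∈ J \ K, ∏ j ∈ K, normPow (x i - x j) (a i j) := by
  have h := prod_pairsIn_union (g := fun i j => normPow (x i - x j) (a i j))
    (normPow_sub_comm ha x) (Finset.disjoint_sdiff (s := K) (t := J))
  rw [Finset.union_sdiff_of_subset hK] at h
  exact h

theorem norm_sub_eq_left {z w : ℚ_[p]} (h : ‖w‖ < ‖z‖) : ‖z - w‖ = ‖z‖ := by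
  rw [sub_eq_add_neg, Padic.add_eq_max_of_ne (by rw [norm_neg]; exact h.ne'), norm_neg,
    max_eq_left h.le]

end Weights

section Shells

variable {p : ℕ} [Fact p.Prime]

theorem coordLint_lt_top_of_shells {b : ℚ_[p]} (hb : ScalesHaar b) {J : Finset ℕ}
    {B S : Set ℚ_[p]} (hB : MeasurableSet B) (hS : MeasurableSet S)
    {f : (ℕ → ℚ_[p]) → ENNReal} (hf : Measurable f) {c : ENNReal}
    (hfb : ∀ x, f x = c * f (b • x)) (hlt : c * ENNReal.ofReal (‖b‖⁻¹) ^ J.card < 1)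
    (hcover : ∀ x, f x ≠ 0 → (∀ i ∈ J, x i ∈ B ∪ S) →
      ∃ k : ℕ, (∀ i ∈ J, b ^ k * x i ∈ B ∪ S) ∧ ∃ i ∈ J, b ^ k * x i ∈ S)
    (hfin : ∀ K ⊆ J, K.Nonempty →
      coordLint J (fun x => boxInd S K x * boxInd B (J \ K) x * f x) < ⊤) :
    coordLint J (fun x => boxInd (B ∪ S) J x * f x) < ⊤ := by
  classical
  set F : Finset (Finset ℕ) := J.powerset.filter Finset.Nonempty
  set g : (ℕ → ℚ_[p]) → ENNReal := fun x =>
    ∑ K ∈ F, boxInd S K x * boxInd B (J \ K) x * f x with hg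
  have hterm : ∀ K : Finset ℕ,
      Measurable fun x => boxInd S K x * boxInd B (J \ K) x * f x := fun K =>
    ((measurable_boxInd hS K).mul (measurable_boxInd hB _)).mul hf
  have hgm : Measurable g := Finset.measurable_sum _ fun K _ => hterm K
  have hgfin : coordLint J g < ⊤ := by
    rw [hg, coordLint_sum _ hterm]
    refine ENNReal.sum_lt_top.2 fun K hK => ?_
    rw [Finset.mem_filter, Finset.mem_powerset] at hK
    exact hfin K hK.1 hK.2
  have hfk : ∀ (k : ℕ) x, f x = c ^ k * f (b ^ k • x) := by
    intro k
    induction k with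
    | zero => simp
    | succ k ih => intro x; rw [ih, hfb, smul_smul, ← pow_succ', ← mul_assoc, ← pow_succ]
  have hle : ∀ x, boxInd (B ∪ S) J x * f x ≤ ∑' k : ℕ, c ^ k * g (b ^ k • x) := by
    intro x
    by_cases hx : ∀ i ∈ J, x i ∈ B ∪ S
    swap
    · push Not at hx
      obtain ⟨i, hi, hx⟩ := hx
      simp [boxInd_eq_zero hi hx]
    by_cases hfx : f x = 0
    · simp [hfx]
    obtain ⟨k, hk, i, hi, hik⟩ := hcover x hfx hx
    refine le_trans ?_ (ENNReal.le_tsum k)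
    rw [boxInd_eq_one hx, one_mul, hfk k x]
    gcongr
    set K := J.filter fun i => b ^ k * x i ∈ S
    have hKF : K ∈ F := by
      rw [Finset.mem_filter, Finset.mem_powerset]
      exact ⟨Finset.filter_subset _ _, i, Finset.mem_filter.2 ⟨hi, hik⟩⟩
    refine le_trans (le_of_eq ?_) (Finset.single_le_sum
      (f := fun K => boxInd S K (b ^ k • x) * boxInd B (J \ K) (b ^ k • x) * f (b ^ k • x))
      (fun _ _ => zero_le) hKF)
    have h1 : boxInd S K (b ^ k • x) = 1 :=
      boxInd_eq_one fun j hj => (Finset.mem_filter.1 hj).2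
    have h2 : boxInd B (J \ K) (b ^ k • x) = 1 := by
      refine boxInd_eq_one fun j hj => ?_
      rw [Finset.mem_sdiff, Finset.mem_filter] at hj
      exact (hk j hj.1).resolve_right fun h => hj.2 ⟨hj.1, h⟩
    simp only [h1, h2, one_mul]
  calc coordLint J (fun x => boxInd (B ∪ S) J x * f x)
      ≤ coordLint J (fun x => ∑' k : ℕ, c ^ k * g (b ^ k • x)) := coordLint_mono hle
    _ = ∑' k : ℕ, coordLint J (fun x => c ^ k * g (b ^ k • x)) :=
        lintegral_tsum fun k => by
          have := measurable_padicCoord (p := p) J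
          fun_prop
    _ = ∑' k : ℕ, (c * ENNReal.ofReal (‖b‖⁻¹) ^ J.card) ^ k * coordLint J g := by
        refine tsum_congr fun k => ?_
        rw [coordLint_const_mul _ (f := fun x => g (b ^ k • x)) (by fun_prop),
          hb.iterate k J hgm, mul_pow, mul_assoc]
    _ = (1 - c * ENNReal.ofReal (‖b‖⁻¹) ^ J.card)⁻¹ * coordLint J g := by
        rw [ENNReal.tsum_mul_right, ENNReal.tsum_geometric]
    _ < ⊤ := ENNReal.mul_lt_top (by simpa using hlt) hgfin

end Shells

section Convergence

variable {p : ℕ} [Fact p.Prime]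

theorem coordLint_lt_top_of_le_mul {K J : Finset ℕ} (hK : K ⊆ J)
    {f g h : (ℕ → ℚ_[p]) → ENNReal} (hf : Measurable f) (hg : Measurable g)
    (hfK : DependsOn f (K : Set ℕ)) (hgK : DependsOn g ((J \ K : Finset ℕ) : Set ℕ))
    (hle : ∀ x, h x ≤ f x * g x) (hfin : coordLint K f < ⊤) (hgin : coordLint (J \ K) g < ⊤) :
    coordLint J h < ⊤ := by
  have hu := coordLint_mul_of_disjoint (Finset.disjoint_sdiff (s := K) (t := J)) hf hg hfK hgK
  rw [Finset.union_sdiff_of_subset hK] at hu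
  exact ((coordLint_mono hle).trans_eq hu).trans_lt (ENNReal.mul_lt_top hfin hgin)

theorem coordLint_weight_lt_top_of_shells {b : ℚ_[p]} (hb0 : b ≠ 0) (hb : ScalesHaar b)
    {J : Finset ℕ} {B S : Set ℚ_[p]} (hB : MeasurableSet B) (hS : MeasurableSet S)
    {e : ℕ → ℝ} {a : ℕ → ℕ → ℝ}
    (hlt : ‖b‖ ^ (-((J.card : ℝ) + ∑ i ∈ J, e i + ∑ q ∈ pairsIn J, a q.1 q.2)) < 1)
    (hcover : ∀ x : ℕ → ℚ_[p], (∀ i ∈ J, x i ≠ 0) → (∀ i ∈ J, x i ∈ B ∪ S) →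
      ∃ k : ℕ, (∀ i ∈ J, b ^ k * x i ∈ B ∪ S) ∧ ∃ i ∈ J, b ^ k * x i ∈ S)
    (hfin : ∀ K ⊆ J, K.Nonempty → coordLint J (fun x =>
      boxInd S K x * boxInd B (J \ K) x * (pointWt e J x * pairWt a J x)) < ⊤) :
    coordLint J (fun x => boxInd (B ∪ S) J x * (pointWt e J x * pairWt a J x)) < ⊤ := by
  have hpos : 0 < ‖b‖ := norm_pos_iff.2 hb0
  refine coordLint_lt_top_of_shells hb hB hS (f := fun x => pointWt e J x * pairWt a J x)
    (c := ENNReal.ofReal (‖b‖ ^ (-(∑ i ∈ J, e i + ∑ q ∈ pairsIn J, a q.1 q.2))))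
    (by fun_prop) ?_ ?_ ?_ hfin
  · intro x
    rw [pointWt_smul hb0, pairWt_smul hb0, mul_mul_mul_comm, ← ENNReal.ofReal_mul (by positivity),
      ← Real.rpow_add hpos, ← mul_assoc, ← ENNReal.ofReal_mul (by positivity),
      ← Real.rpow_add hpos]
    simp
  · rw [← ENNReal.ofReal_pow (by positivity), ← ENNReal.ofReal_mul (by positivity),
      ← Real.rpow_natCast, ← Real.rpow_neg_one, ← Real.rpow_mul hpos.le, ← Real.rpow_add hpos,
      ENNReal.ofReal_lt_one]
    convert hlt using 2
    ring
  · intro x hx hxJ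
    refine hcover x (fun i hi h0 => hx ?_) hxJ
    have : pointWt e J x = 0 := Finset.prod_eq_zero hi (by rw [h0, normPow_zero_left])
    simp only [this, zero_mul]

theorem exists_norm_eq_inv_pow {z : ℚ_[p]} (hz : z ≠ 0) (h : ‖z‖ ≤ 1) :
    ∃ k : ℕ, ‖z‖ = ((p : ℝ) ^ k)⁻¹ := by
  have hp : (1 : ℝ) < p := by exact_mod_cast (Fact.out : p.Prime).one_lt
  rw [Padic.norm_eq_zpow_neg_valuation hz] at h ⊢
  have hv : 0 ≤ z.valuation := by
    by_contra hv
    exact absurd h (not_le.2 (one_lt_zpow₀ hp (by omega)))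
  obtain ⟨k, hk⟩ := Int.eq_ofNat_of_zero_le hv
  exact ⟨k, by rw [hk, zpow_neg]; rfl⟩

/-- Convergence of the integral over a unit ball with one marked point at the centre. -/
theorem coordLint_marked_lt_top {a : ℕ → ℕ → ℝ} (ha : ∀ i j, a i j = a j i) (e : ℕ → ℝ)
    (J : Finset ℕ)
    (hunmarked : ∀ K ⊆ J, coordLint (p := p) K
      (fun x => boxInd (Metric.closedBall 0 1) K x * pairWt a K x) < ⊤)
    (hpos : ∀ L ⊆ J, L.Nonempty →
      0 < (L.card : ℝ) + ∑ i ∈ L, e i + ∑ q ∈ pairsIn L, a q.1 q.2) :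
    coordLint (p := p) J (fun x => boxInd (Metric.closedBall 0 1) J x *
      (pointWt e J x * pairWt a J x)) < ⊤ := by
  induction J using Finset.strongInduction with
  | H J ih =>
  rcases J.eq_empty_or_nonempty with rfl | hJ
  · simp [coordLint_empty, boxInd, pointWt, pairWt, pairsIn]
  have hp : (1 : ℝ) < p := by exact_mod_cast (Fact.out : p.Prime).one_lt
  have hp0 : (p : ℚ_[p]) ≠ 0 := by exact_mod_cast (Fact.out : p.Prime).ne_zero
  rw [← Metric.ball_union_sphere]
  refine coordLint_weight_lt_top_of_shells (inv_ne_zero hp0) scalesHaar_inv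
    Metric.isOpen_ball.measurableSet Metric.isClosed_sphere.measurableSet ?_ ?_ ?_
  · rw [norm_inv, Padic.norm_p, inv_inv]
    exact Real.rpow_lt_one_of_one_lt_of_neg hp (neg_lt_zero.2 (hpos J subset_rfl hJ))
  · intro x hx0 hx
    rw [Metric.ball_union_sphere] at hx ⊢
    obtain ⟨i, hi, hmax⟩ := J.exists_max_image (fun i => ‖x i‖) hJ
    obtain ⟨k, hk⟩ := exists_norm_eq_inv_pow (hx0 i hi) (by simpa using hx i hi)
    have hpk : (0 : ℝ) < p ^ k := by positivity
    have hn : ∀ j, ‖(p : ℚ_[p])⁻¹ ^ k * x j‖ = p ^ k * ‖x j‖ := fun j => by simp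
    refine ⟨k, fun j hj => ?_, i, hi, ?_⟩
    · rw [mem_closedBall_zero_iff, hn]
      calc (p : ℝ) ^ k * ‖x j‖ ≤ p ^ k * ‖x i‖ := by gcongr; exact hmax j hj
        _ = 1 := by rw [hk, mul_inv_cancel₀ hpk.ne']
    · rw [mem_sphere_zero_iff_norm, hn, hk, mul_inv_cancel₀ hpk.ne']
  · intro K hK hKne
    have hss : J \ K ⊂ J := Finset.sdiff_ssubset hK hKne
    refine coordLint_lt_top_of_le_mul hK
      (f := fun x => boxInd (Metric.closedBall 0 1) K x * pairWt a K x)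
      (g := fun x => boxInd (Metric.closedBall 0 1) (J \ K) x *
        (pointWt e (J \ K) x * pairWt a (J \ K) x))
      ((measurable_boxInd Metric.isClosed_closedBall.measurableSet _).mul (by fun_prop))
      ((measurable_boxInd Metric.isClosed_closedBall.measurableSet _).mul (by fun_prop))
      (dependsOn_mul (dependsOn_boxInd _ _) (dependsOn_pairWt _ _))
      (dependsOn_mul (dependsOn_boxInd _ _)
        (dependsOn_mul (dependsOn_pointWt _ _) (dependsOn_pairWt _ _)))
      (fun x => ?_) (hunmarked K hK)
      (ih _ hss (fun L hL => hunmarked L (hL.trans hss.subset))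
        fun L hL => hpos L (hL.trans hss.subset))
    by_cases h1 : ∀ i ∈ K, x i ∈ Metric.sphere (0 : ℚ_[p]) 1
    swap
    · push Not at h1
      obtain ⟨i, hi, h1⟩ := h1
      simp [boxInd_eq_zero hi h1]
    by_cases h2 : ∀ i ∈ J \ K, x i ∈ Metric.ball (0 : ℚ_[p]) 1
    swap
    · push Not at h2
      obtain ⟨i, hi, h2⟩ := h2
      simp [boxInd_eq_zero hi h2]
    rw [boxInd_eq_one h1, boxInd_eq_one h2,
      boxInd_eq_one fun i hi => Metric.sphere_subset_closedBall (h1 i hi),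
      boxInd_eq_one fun i hi => Metric.ball_subset_closedBall (h2 i hi),
      pointWt_sdiff hK, pairWt_sdiff ha hK]
    simp only [mem_sphere_zero_iff_norm, mem_ball_zero_iff] at h1 h2
    have hpt : pointWt e K x = 1 :=
      Finset.prod_eq_one fun i hi => normPow_of_norm_eq_one (h1 i hi) _
    have hcross : ∏ i ∈ J \ K, ∏ j ∈ K, normPow (x i - x j) (a i j) = 1 :=
      Finset.prod_eq_one fun i hi => Finset.prod_eq_one fun j hj =>
        normPow_of_norm_eq_one (by
          rw [norm_sub_rev, norm_sub_eq_left (by rw [h1 j hj]; exact h2 i hi), h1 j hj]) _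
    rw [hpt, hcross]
    simp only [one_mul, mul_one]
    exact (mul_left_comm _ _ _).le

theorem coordLint_boxInd_closedBall_lt_top (J : Finset ℕ) :
    coordLint (p := p) J (boxInd (Metric.closedBall 0 1) J) < ⊤ := by
  have hc : IsCompact (Set.univ.pi fun _ : J => Metric.closedBall (0 : ℚ_[p]) 1) :=
    isCompact_univ_pi fun _ => isCompact_closedBall 0 1
  refine lt_of_le_of_lt ?_ (hc.measure_lt_top (μ := padicPi p J))
  rw [← lintegral_indicator_one hc.measurableSet]
  refine lintegral_mono fun y => ?_
  by_cases hy : y ∈ Set.univ.pi fun _ : J => Metric.closedBall (0 : ℚ_[p]) 1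
  · rw [Set.indicator_of_mem hy]
    exact Finset.prod_le_one' fun i _ => Set.indicator_le_self' (by simp) _
  · rw [Set.mem_univ_pi] at hy
    push Not at hy
    obtain ⟨i, hi⟩ := hy
    rw [boxInd_eq_zero i.2 (by rwa [padicCoord_of_mem y i.2])]
    exact zero_le

/-- Convergence of the integral over a unit ball without marked points. -/
theorem coordLint_unmarked_lt_top {a : ℕ → ℕ → ℝ} (ha : ∀ i j, a i j = a j i) (A : Finset ℕ)
    (hpos : ∀ L ⊆ A, 2 ≤ L.card → 0 < (L.card : ℝ) - 1 + ∑ q ∈ pairsIn L, a q.1 q.2) :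
    coordLint (p := p) A
      (fun x => boxInd (Metric.closedBall 0 1) A x * pairWt a A x) < ⊤ := by
  induction A using Finset.strongInduction with
  | H A ih =>
  rcases A.eq_empty_or_nonempty with rfl | ⟨m, hm⟩
  · simp [coordLint_empty, boxInd, pairWt, pairsIn]
  obtain ⟨J, hmJ, rfl⟩ : ∃ J, m ∉ J ∧ insert m J = A :=
    ⟨A.erase m, Finset.notMem_erase m A, Finset.insert_erase hm⟩
  have hmarked := coordLint_marked_lt_top (p := p) ha (a m) J
    (fun K hK => ih K (Finset.ssubset_of_subset_of_ssubset hK (Finset.ssubset_insert hmJ))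
      fun L hL => hpos L ((hL.trans hK).trans (Finset.subset_insert m J))) (by
    intro L hL hLne
    have hmL : m ∉ L := fun h => hmJ (hL h)
    have h := hpos (insert m L) (Finset.insert_subset_insert m hL) (by
      rw [Finset.card_insert_of_notMem hmL]
      have := hLne.card_pos
      omega)
    rw [sum_pairsIn_insert ha hmL, Finset.card_insert_of_notMem hmL] at h
    push_cast at h
    linarith)
  set C := coordLint (p := p) J (fun x => boxInd (Metric.closedBall 0 1) J x *
      (pointWt (a m) J x * pairWt a J x)) with hC
  have hbox := measurable_boxInd (p := p) (U := Metric.closedBall 0 1)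
    Metric.isClosed_closedBall.measurableSet
  rw [coordLint_insert hmJ
    (f := fun x => boxInd (Metric.closedBall 0 1) (insert m J) x * pairWt a (insert m J) x)
    ((hbox _).mul (measurable_pairWt _ _))
    (dependsOn_mul (dependsOn_boxInd _ _) (dependsOn_pairWt _ _))]
  have hle : ∀ x : ℕ → ℚ_[p], (coordLint J fun y =>
      boxInd (Metric.closedBall 0 1) (insert m J) (fun i => if i = m then x m else y i + x m) *
      pairWt a (insert m J) (fun i => if i = m then x m else y i + x m)) ≤
      C * boxInd (Metric.closedBall 0 1) {m} x := by
    intro x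
    by_cases hx : x m ∈ Metric.closedBall (0 : ℚ_[p]) 1
    swap
    · have hz : ∀ y : ℕ → ℚ_[p], boxInd (Metric.closedBall 0 1) (insert m J)
          (fun i => if i = m then x m else y i + x m) = 0 := fun y =>
        boxInd_eq_zero (Finset.mem_insert_self m J) (by simpa using hx)
      simp [hz, coordLint]
    rw [boxInd_eq_one (J := {m}) (by simpa using hx), mul_one, hC]
    refine coordLint_mono fun y => ?_
    have hpair : pairWt a (insert m J) (fun i => if i = m then x m else y i + x m) =
        pointWt (a m) J y * pairWt a J y := by
      have hne : ∀ j ∈ J, j ≠ m := fun j hj h => hmJ (h ▸ hj)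
      rw [pairWt, prod_pairsIn_insert (g := fun i j => normPow
        ((if i = m then x m else y i + x m) - (if j = m then x m else y j + x m)) (a i j))
        (normPow_sub_comm ha fun i => if i = m then x m else y i + x m) hmJ]
      congr 1
      · refine Finset.prod_congr rfl fun j hj => normPow_congr ?_ _
        simp [hne j hj]
      · refine Finset.prod_congr rfl fun q hq => ?_
        have hq' := mem_of_mem_pairsIn hq
        simp [hne _ hq'.1, hne _ hq'.2]
    rw [hpair]
    gcongr
    by_cases hy : ∀ i ∈ J, y i ∈ Metric.closedBall (0 : ℚ_[p]) 1
    · rw [boxInd_eq_one hy]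
      exact Finset.prod_le_one' fun i _ => Set.indicator_le_self' (by simp) _
    · push Not at hy
      obtain ⟨i, hi, hy⟩ := hy
      have him : i ≠ m := fun h => hmJ (h ▸ hi)
      rw [boxInd_eq_zero (Finset.mem_insert_of_mem hi)]
      · exact zero_le
      · simp only [him, if_false]
        intro h
        apply hy
        rw [mem_closedBall_zero_iff] at h hx ⊢
        calc ‖y i‖ = ‖(y i + x m) + -x m‖ := by ring_nf
          _ ≤ max ‖y i + x m‖ ‖-x m‖ := Padic.nonarchimedean _ _
          _ ≤ 1 := max_le h (by rwa [norm_neg])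
  refine (coordLint_mono hle).trans_lt ?_
  rw [coordLint_const_mul _ (hbox _)]
  exact ENNReal.mul_lt_top hmarked (coordLint_boxInd_closedBall_lt_top _)

end Convergence

section Far

variable {p : ℕ} [Fact p.Prime]

theorem exists_norm_eq_pow {z : ℚ_[p]} (h : 1 ≤ ‖z‖) : ∃ k : ℕ, ‖z‖ = (p : ℝ) ^ k := by
  have hz : z ≠ 0 := norm_pos_iff.1 (zero_lt_one.trans_le h)
  obtain ⟨k, hk⟩ := exists_norm_eq_inv_pow (inv_ne_zero hz)
    (by rw [norm_inv]; exact inv_le_one_of_one_le₀ h)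
  exact ⟨k, by rwa [norm_inv, inv_inj] at hk⟩

theorem pointWt_add (e e' : ℕ → ℝ) (J : Finset ℕ) (x : ℕ → ℚ_[p]) :
    pointWt (fun i => e i + e' i) J x = pointWt e J x * pointWt e' J x := by
  simp only [pointWt, normPow_add, Finset.prod_mul_distrib]

/-- Points of larger norm see the points of smaller norm as if they were at the origin. -/
theorem prod_normPow_sub_eq_pointWt {a : ℕ → ℕ → ℝ} {K L : Finset ℕ} {x : ℕ → ℚ_[p]}
    (h : ∀ i ∈ L, ∀ j ∈ K, ‖x j‖ < ‖x i‖) (h0 : ∀ i ∈ L, x i ≠ 0) :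
    ∏ i ∈ L, ∏ j ∈ K, normPow (x i - x j) (a i j) =
      pointWt (fun i => ∑ j ∈ K, a i j) L x := by
  refine Finset.prod_congr rfl fun i hi => ?_
  rw [normPow_sum (h0 i hi)]
  exact Finset.prod_congr rfl fun j hj => normPow_congr (norm_sub_eq_left (h i hi j hj)) _

theorem sum_pairsIn_sub_sdiff {a : ℕ → ℕ → ℝ} (ha : ∀ i j, a i j = a j i)
    {J K L : Finset ℕ} (hK : K ⊆ J) (hL : L ⊆ J \ K) :
    (∑ q ∈ pairsIn J, a q.1 q.2) - ∑ q ∈ pairsIn (J \ L), a q.1 q.2 =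
      (∑ q ∈ pairsIn (J \ K), a q.1 q.2) - (∑ q ∈ pairsIn ((J \ K) \ L), a q.1 q.2) +
        ∑ i ∈ L, ∑ j ∈ K, a i j := by
  have h1 := sum_pairsIn_union ha (Finset.disjoint_sdiff (s := K) (t := J))
  have h2 := sum_pairsIn_union ha (K := K) (L := (J \ K) \ L)
    (Finset.disjoint_sdiff.mono_right Finset.sdiff_subset)
  have h3 : K ∪ (J \ K) \ L = J \ L := by
    ext i
    have := @hK i
    have := @hL i
    simp only [Finset.mem_union, Finset.mem_sdiff] at *
    tauto
  rw [Finset.union_sdiff_of_subset hK] at h1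
  rw [h3] at h2
  have h4 := Finset.sum_sdiff (f := fun i => ∑ j ∈ K, a i j) hL
  linarith

/-- Convergence of the integral over the points of norm at least `1`. -/
theorem coordLint_far_lt_top {a : ℕ → ℕ → ℝ} (ha : ∀ i j, a i j = a j i) (e : ℕ → ℝ)
    (J : Finset ℕ)
    (hunmarked : ∀ K ⊆ J, coordLint (p := p) K
      (fun x => boxInd (Metric.closedBall 0 1) K x * pairWt a K x) < ⊤)
    (hneg : ∀ L ⊆ J, L.Nonempty → (L.card : ℝ) + ∑ i ∈ L, e i +
      ((∑ q ∈ pairsIn J, a q.1 q.2) - ∑ q ∈ pairsIn (J \ L), a q.1 q.2) < 0) :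
    coordLint (p := p) J (fun x =>
      boxInd ((Metric.closedBall 0 1)ᶜ ∪ Metric.sphere 0 1) J x *
      (pointWt e J x * pairWt a J x)) < ⊤ := by
  induction J using Finset.strongInduction generalizing e with
  | H J ih =>
  rcases J.eq_empty_or_nonempty with rfl | hJ
  · simp [coordLint_empty, boxInd, pointWt, pairWt, pairsIn]
  have hp : (1 : ℝ) < p := by exact_mod_cast (Fact.out : p.Prime).one_lt
  have hp0 : (p : ℚ_[p]) ≠ 0 := by exact_mod_cast (Fact.out : p.Prime).ne_zero
  have hBm : MeasurableSet ((Metric.closedBall (0 : ℚ_[p]) 1)ᶜ) :=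
    Metric.isClosed_closedBall.measurableSet.compl
  have hSm : MeasurableSet (Metric.sphere (0 : ℚ_[p]) 1) := Metric.isClosed_sphere.measurableSet
  have hmem : ∀ z : ℚ_[p], z ∈ (Metric.closedBall 0 1)ᶜ ∪ Metric.sphere (0 : ℚ_[p]) 1 ↔
      1 ≤ ‖z‖ := fun z => by
    simp only [Set.mem_union, Set.mem_compl_iff, mem_closedBall_zero_iff, not_le,
      mem_sphere_zero_iff_norm]
    rw [le_iff_lt_or_eq, eq_comm (a := (1 : ℝ))]
  refine coordLint_weight_lt_top_of_shells hp0 scalesHaar_natCast hBm hSm ?_ ?_ ?_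
  · have h := hneg J subset_rfl hJ
    rw [Finset.sdiff_self, show pairsIn ∅ = ∅ from rfl, Finset.sum_empty, sub_zero] at h
    rw [Padic.norm_p]
    exact Real.rpow_lt_one (by positivity) (inv_lt_one_of_one_lt₀ hp) (neg_pos.2 h)
  · intro x hx0 hx
    simp only [hmem] at hx ⊢
    obtain ⟨i, hi, hmin⟩ := J.exists_min_image (fun i => ‖x i‖) hJ
    obtain ⟨k, hk⟩ := exists_norm_eq_pow (hx i hi)
    have hpk : (0 : ℝ) < p ^ k := by positivity
    have hn : ∀ j, ‖(p : ℚ_[p]) ^ k * x j‖ = ((p : ℝ) ^ k)⁻¹ * ‖x j‖ := fun j => by simp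
    refine ⟨k, fun j hj => ?_, i, hi, ?_⟩
    · rw [hn]
      calc (1 : ℝ) = ((p : ℝ) ^ k)⁻¹ * ‖x i‖ := by rw [hk, inv_mul_cancel₀ hpk.ne']
        _ ≤ ((p : ℝ) ^ k)⁻¹ * ‖x j‖ := by gcongr; exact hmin j hj
    · rw [mem_sphere_zero_iff_norm, hn, hk, inv_mul_cancel₀ hpk.ne']
  · intro K hK hKne
    have hss : J \ K ⊂ J := Finset.sdiff_ssubset hK hKne
    refine coordLint_lt_top_of_le_mul hK
      (f := fun x => boxInd (Metric.closedBall 0 1) K x * pairWt a K x)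
      (g := fun x => boxInd ((Metric.closedBall 0 1)ᶜ ∪ Metric.sphere 0 1) (J \ K) x *
        (pointWt (fun i => e i + ∑ j ∈ K, a i j) (J \ K) x * pairWt a (J \ K) x))
      ((measurable_boxInd Metric.isClosed_closedBall.measurableSet _).mul (by fun_prop))
      ((measurable_boxInd (hBm.union hSm) _).mul (by fun_prop))
      (dependsOn_mul (dependsOn_boxInd _ _) (dependsOn_pairWt _ _))
      (dependsOn_mul (dependsOn_boxInd _ _)
        (dependsOn_mul (dependsOn_pointWt _ _) (dependsOn_pairWt _ _)))
      (fun x => ?_) (hunmarked K hK)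
      (ih _ hss _ (fun L hL => hunmarked L (hL.trans hss.subset)) fun L hL hLne => ?_)
    · by_cases h1 : ∀ i ∈ K, x i ∈ Metric.sphere (0 : ℚ_[p]) 1
      swap
      · push Not at h1
        obtain ⟨i, hi, h1⟩ := h1
        simp [boxInd_eq_zero hi h1]
      by_cases h2 : ∀ i ∈ J \ K, x i ∈ (Metric.closedBall (0 : ℚ_[p]) 1)ᶜ
      swap
      · push Not at h2
        obtain ⟨i, hi, h2⟩ := h2
        simp [boxInd_eq_zero hi h2]
      rw [boxInd_eq_one h1, boxInd_eq_one h2,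
        boxInd_eq_one fun i hi => Metric.sphere_subset_closedBall (h1 i hi),
        boxInd_eq_one fun i hi => Set.mem_union_left _ (h2 i hi),
        pointWt_sdiff hK, pairWt_sdiff ha hK, pointWt_add]
      simp only [mem_sphere_zero_iff_norm, Set.mem_compl_iff, mem_closedBall_zero_iff,
        not_le] at h1 h2
      have hpt : pointWt e K x = 1 :=
        Finset.prod_eq_one fun i hi => normPow_of_norm_eq_one (h1 i hi) _
      rw [hpt, prod_normPow_sub_eq_pointWt (fun i hi j hj => by rw [h1 j hj]; exact h2 i hi)
        fun i hi => norm_pos_iff.1 (zero_lt_one.trans (h2 i hi))]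
      refine le_of_eq ?_
      ring
    · have h := hneg L (hL.trans hss.subset) hLne
      rw [sum_pairsIn_sub_sdiff ha hK hL] at h
      rw [Finset.sum_add_distrib]
      linarith

end Far

section KobaNielsen

variable {p : ℕ} [Fact p.Prime]

theorem coordLint_lt_top_of_union {U V : Set ℚ_[p]} (hU : MeasurableSet U)
    (hV : MeasurableSet V) {J : Finset ℕ} {f : (ℕ → ℚ_[p]) → ENNReal} (hf : Measurable f)
    (hfin : ∀ K ⊆ J, coordLint J (fun x => boxInd U K x * boxInd V (J \ K) x * f x) < ⊤) :
    coordLint J (fun x => boxInd (U ∪ V) J x * f x) < ⊤ := by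
  have hle : ∀ x, boxInd (U ∪ V) J x * f x ≤
      ∑ K ∈ J.powerset, boxInd U K x * boxInd V (J \ K) x * f x := fun x => by
    rw [← Finset.sum_mul]
    gcongr
    exact boxInd_union_le U V J x
  refine (coordLint_mono hle).trans_lt ?_
  rw [coordLint_sum (f := fun K x => boxInd U K x * boxInd V (J \ K) x * f x) _
    fun K => ((measurable_boxInd hU K).mul (measurable_boxInd hV _)).mul hf]
  exact ENNReal.sum_lt_top.2 fun K hK => hfin K (Finset.mem_powerset.1 hK)

/-- The Koba–Nielsen weight of the points `x i`, `i ∈ J`, with marked points `0` and `1`. -/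
def kobaNielsenWt (u v : ℕ → ℝ) (a : ℕ → ℕ → ℝ) (J : Finset ℕ) (x : ℕ → ℚ_[p]) : ENNReal :=
  pointWt u J x * pointWt v J (1 - x) * pairWt a J x

@[fun_prop]
theorem measurable_kobaNielsenWt (u v : ℕ → ℝ) (a : ℕ → ℕ → ℝ) (J : Finset ℕ) :
    Measurable (kobaNielsenWt (p := p) u v a J) := by
  unfold kobaNielsenWt
  exact ((measurable_pointWt _ _).mul ((measurable_pointWt _ _).comp
    (measurable_const.sub measurable_id))).mul (measurable_pairWt _ _)

theorem dependsOn_comp_one_sub {f : (ℕ → ℚ_[p]) → ENNReal} {s : Set ℕ} (hf : DependsOn f s) :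
    DependsOn (fun x => f (1 - x)) s := fun x y h =>
  hf fun i hi => by rw [Pi.sub_apply, Pi.sub_apply, h i hi]

theorem dependsOn_kobaNielsenWt (u v : ℕ → ℝ) (a : ℕ → ℕ → ℝ) (J : Finset ℕ) :
    DependsOn (kobaNielsenWt (p := p) u v a J) (J : Set ℕ) :=
  dependsOn_mul (dependsOn_mul (dependsOn_pointWt u J)
    (dependsOn_comp_one_sub (dependsOn_pointWt v J))) (dependsOn_pairWt a J)

theorem pairWt_one_sub (a : ℕ → ℕ → ℝ) (J : Finset ℕ) (x : ℕ → ℚ_[p]) :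
    pairWt a J (1 - x) = pairWt a J x :=
  Finset.prod_congr rfl fun q _ => normPow_congr (by
    rw [Pi.sub_apply, Pi.sub_apply, Pi.one_apply, Pi.one_apply, sub_sub_sub_cancel_left,
      norm_sub_rev]) _

/-- Convergence of the Koba–Nielsen integral over `ℤ_p`-points. -/
theorem coordLint_kobaNielsenWt_closedBall_lt_top {u v : ℕ → ℝ} {a : ℕ → ℕ → ℝ}
    (ha : ∀ i j, a i j = a j i) {J : Finset ℕ}
    (hunmarked : ∀ K ⊆ J, coordLint (p := p) K
      (fun x => boxInd (Metric.closedBall 0 1) K x * pairWt a K x) < ⊤)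
    (hu : ∀ L ⊆ J, L.Nonempty →
      0 < (L.card : ℝ) + ∑ i ∈ L, u i + ∑ q ∈ pairsIn L, a q.1 q.2)
    (hv : ∀ L ⊆ J, L.Nonempty →
      0 < (L.card : ℝ) + ∑ i ∈ L, v i + ∑ q ∈ pairsIn L, a q.1 q.2) :
    coordLint (p := p) J (fun x => boxInd (Metric.closedBall 0 1) J x *
      kobaNielsenWt u v a J x) < ⊤ := by
  rw [← Metric.ball_union_sphere]
  refine coordLint_lt_top_of_union Metric.isOpen_ball.measurableSet
    Metric.isClosed_sphere.measurableSet (measurable_kobaNielsenWt u v a J) fun K hK => ?_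
  have hmeas : ∀ (w : ℕ → ℝ) (L : Finset ℕ), Measurable fun x : ℕ → ℚ_[p] =>
      boxInd (Metric.closedBall 0 1) L x * (pointWt w L x * pairWt a L x) := fun w L =>
    (measurable_boxInd Metric.isClosed_closedBall.measurableSet _).mul
      ((measurable_pointWt _ _).mul (measurable_pairWt _ _))
  have hdep : ∀ (w : ℕ → ℝ) (L : Finset ℕ), DependsOn (fun x : ℕ → ℚ_[p] =>
      boxInd (Metric.closedBall 0 1) L x * (pointWt w L x * pairWt a L x)) (L : Set ℕ) :=
    fun w L => dependsOn_mul (dependsOn_boxInd _ _)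
      (dependsOn_mul (dependsOn_pointWt _ _) (dependsOn_pairWt _ _))
  have hsub : J \ K ⊆ J := Finset.sdiff_subset
  have hgin := coordLint_marked_lt_top ha v (J \ K)
    (fun L hL => hunmarked L (hL.trans hsub)) fun L hL => hv L (hL.trans hsub)
  rw [← coordLint_one_sub _ (hmeas v (J \ K)) (hdep v (J \ K))] at hgin
  refine coordLint_lt_top_of_le_mul hK
    (g := fun x => boxInd (Metric.closedBall 0 1) (J \ K) (1 - x) *
      (pointWt v (J \ K) (1 - x) * pairWt a (J \ K) (1 - x))) (hmeas u K)
    ((hmeas v (J \ K)).comp (measurable_id.const_sub 1)) (hdep u K)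
    (dependsOn_comp_one_sub (hdep v (J \ K))) (fun x => ?_)
    (coordLint_marked_lt_top ha u K (fun L hL => hunmarked L (hL.trans hK))
      fun L hL => hu L (hL.trans hK)) hgin
  by_cases h1 : ∀ i ∈ K, x i ∈ Metric.ball (0 : ℚ_[p]) 1
  swap
  · push Not at h1
    obtain ⟨i, hi, h1⟩ := h1
    simp [boxInd_eq_zero hi h1]
  by_cases h2 : ∀ i ∈ J \ K, x i ∈ Metric.sphere (0 : ℚ_[p]) 1
  swap
  · push Not at h2
    obtain ⟨i, hi, h2⟩ := h2
    simp [boxInd_eq_zero hi h2]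
  have h3 : boxInd (Metric.closedBall 0 1) (J \ K) (1 - x) = 1 := by
    refine boxInd_eq_one fun i hi => ?_
    have := h2 i hi
    rw [mem_sphere_zero_iff_norm] at this
    rw [mem_closedBall_zero_iff, Pi.sub_apply, Pi.one_apply, sub_eq_add_neg]
    exact (Padic.nonarchimedean _ _).trans (by simp [this])
  rw [boxInd_eq_one h1, boxInd_eq_one h2, h3,
    boxInd_eq_one fun i hi => Metric.ball_subset_closedBall (h1 i hi), kobaNielsenWt,
    pointWt_sdiff hK u, pointWt_sdiff hK v, pairWt_sdiff ha hK, pairWt_one_sub]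
  simp only [mem_sphere_zero_iff_norm, mem_ball_zero_iff] at h1 h2
  have hptu : pointWt u (J \ K) x = 1 :=
    Finset.prod_eq_one fun i hi => normPow_of_norm_eq_one (h2 i hi) _
  have hptv : pointWt v K (1 - x) = 1 :=
    Finset.prod_eq_one fun i hi => normPow_of_norm_eq_one (by
      rw [Pi.sub_apply, Pi.one_apply, norm_sub_eq_left (by simpa using h1 i hi), norm_one]) _
  have hcross : ∏ i ∈ J \ K, ∏ j ∈ K, normPow (x i - x j) (a i j) = 1 :=
    Finset.prod_eq_one fun i hi => Finset.prod_eq_one fun j hj =>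
      normPow_of_norm_eq_one (by
        rw [norm_sub_eq_left (by rw [h2 i hi]; exact h1 j hj), h2 i hi]) _
  rw [hptu, hptv, hcross]
  refine le_of_eq ?_
  ring

/-- Absolute convergence of the Koba–Nielsen integral. -/
theorem coordLint_kobaNielsenWt_lt_top {u v : ℕ → ℝ} {a : ℕ → ℕ → ℝ}
    (ha : ∀ i j, a i j = a j i) {J : Finset ℕ}
    (hpair : ∀ L ⊆ J, 2 ≤ L.card → 0 < (L.card : ℝ) - 1 + ∑ q ∈ pairsIn L, a q.1 q.2)
    (hu : ∀ L ⊆ J, L.Nonempty →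
      0 < (L.card : ℝ) + ∑ i ∈ L, u i + ∑ q ∈ pairsIn L, a q.1 q.2)
    (hv : ∀ L ⊆ J, L.Nonempty →
      0 < (L.card : ℝ) + ∑ i ∈ L, v i + ∑ q ∈ pairsIn L, a q.1 q.2)
    (hneg : ∀ L ⊆ J, L.Nonempty → (L.card : ℝ) + ∑ i ∈ L, (u i + v i) +
      ((∑ q ∈ pairsIn J, a q.1 q.2) - ∑ q ∈ pairsIn (J \ L), a q.1 q.2) < 0) :
    coordLint (p := p) J (kobaNielsenWt u v a J) < ⊤ := by
  have hunmarked : ∀ K ⊆ J, coordLint (p := p) K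
      (fun x => boxInd (Metric.closedBall 0 1) K x * pairWt a K x) < ⊤ := fun K hK =>
    coordLint_unmarked_lt_top ha K fun L hL => hpair L (hL.trans hK)
  have hUm : MeasurableSet (Metric.closedBall (0 : ℚ_[p]) 1) :=
    Metric.isClosed_closedBall.measurableSet
  have hVm : MeasurableSet ((Metric.closedBall (0 : ℚ_[p]) 1)ᶜ ∪ Metric.sphere 0 1) :=
    hUm.compl.union Metric.isClosed_sphere.measurableSet
  refine lt_of_le_of_lt (coordLint_mono fun x => ?_) (coordLint_lt_top_of_union hUm hUm.compl
    (measurable_kobaNielsenWt u v a J) fun K hK => ?_)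
  · rw [boxInd_eq_one fun i _ => by rw [Set.union_compl_self]; exact Set.mem_univ _, one_mul]
  have hsub : J \ K ⊆ J := Finset.sdiff_subset
  refine coordLint_lt_top_of_le_mul hK
    (f := fun x => boxInd (Metric.closedBall 0 1) K x * kobaNielsenWt u v a K x)
    (g := fun x => boxInd ((Metric.closedBall 0 1)ᶜ ∪ Metric.sphere 0 1) (J \ K) x *
      (pointWt (fun i => u i + v i + ∑ j ∈ K, a i j) (J \ K) x * pairWt a (J \ K) x))
    ((measurable_boxInd hUm _).mul (measurable_kobaNielsenWt u v a K))
    ((measurable_boxInd hVm _).mul ((measurable_pointWt _ _).mul (measurable_pairWt _ _)))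
    (dependsOn_mul (dependsOn_boxInd _ _) (dependsOn_kobaNielsenWt _ _ _ _))
    (dependsOn_mul (dependsOn_boxInd _ _)
      (dependsOn_mul (dependsOn_pointWt _ _) (dependsOn_pairWt _ _)))
    (fun x => ?_)
    (coordLint_kobaNielsenWt_closedBall_lt_top ha (fun L hL => hunmarked L (hL.trans hK))
      (fun L hL => hu L (hL.trans hK)) fun L hL => hv L (hL.trans hK))
    (coordLint_far_lt_top ha _ _ (fun L hL => hunmarked L (hL.trans hsub)) fun L hL hLne => ?_)
  · by_cases h1 : ∀ i ∈ K, x i ∈ Metric.closedBall (0 : ℚ_[p]) 1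
    swap
    · push Not at h1
      obtain ⟨i, hi, h1⟩ := h1
      simp [boxInd_eq_zero hi h1]
    by_cases h2 : ∀ i ∈ J \ K, x i ∈ (Metric.closedBall (0 : ℚ_[p]) 1)ᶜ
    swap
    · push Not at h2
      obtain ⟨i, hi, h2⟩ := h2
      simp [boxInd_eq_zero hi h2]
    rw [boxInd_eq_one h1, boxInd_eq_one h2,
      boxInd_eq_one fun i hi => Set.mem_union_left _ (h2 i hi), kobaNielsenWt, kobaNielsenWt,
      pointWt_sdiff hK u, pointWt_sdiff hK v, pairWt_sdiff ha hK, pointWt_add, pointWt_add]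
    simp only [Set.mem_compl_iff, mem_closedBall_zero_iff, not_le] at h1 h2
    have hptv : pointWt v (J \ K) (1 - x) = pointWt v (J \ K) x :=
      Finset.prod_congr rfl fun i hi => normPow_congr (by
        rw [Pi.sub_apply, Pi.one_apply, norm_sub_rev,
          norm_sub_eq_left (by simpa using h2 i hi)]) _
    rw [hptv, prod_normPow_sub_eq_pointWt (fun i hi j hj => (h1 j hj).trans_lt (h2 i hi))
      fun i hi => norm_pos_iff.1 (zero_lt_one.trans (h2 i hi))]
    refine le_of_eq ?_
    ring
  · have h := hneg L (hL.trans hsub) hLne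
    rw [sum_pairsIn_sub_sdiff ha hK hL] at h
    rw [Finset.sum_add_distrib]
    linarith

theorem coordLint_lt_top_of_H0C {N : ℕ} {s : ℕ → ℕ → ℂ} (hsym : ∀ i j, s i j = s j i)
    (hs : H0C N s) :
    coordLint (p := p) (Tset N) (kobaNielsenWt (fun i => (s 1 i).re)
      (fun i => (s (N - 1) i).re) (fun i j => (s i j).re) (Tset N)) < ⊤ := by
  obtain ⟨h1, h2, h3, -⟩ := hs
  refine coordLint_kobaNielsenWt_lt_top (fun i j => by rw [hsym]) h2
    (fun L hL hLne => h3 1 (by simp) L hL L subset_rfl (Or.inr hLne.card_pos))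
    (fun L hL hLne => h3 (N - 1) (by simp) L hL L subset_rfl (Or.inr hLne.card_pos))
    fun L hL hLne => ?_
  rw [← sum_pairsIn_touching (fun i j => (s i j).re), ← add_assoc]
  exact h1 L hL hLne

theorem enorm_ofReal_cpow {z : ℚ_[p]} (hz : z ≠ 0) (w : ℂ) :
    ‖(‖z‖ : ℂ) ^ w‖ₑ = normPow z w.re := by
  rw [normPow_of_ne_zero hz, ← ofReal_norm,
    Complex.norm_cpow_eq_rpow_re_of_pos (norm_pos_iff.2 hz)]

theorem enorm_prod_complex {κ : Type*} (t : Finset κ) (f : κ → ℂ) :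
    ‖∏ i ∈ t, f i‖ₑ = ∏ i ∈ t, ‖f i‖ₑ := by
  simp only [← ofReal_norm, norm_prod]
  exact ENNReal.ofReal_prod_of_nonneg fun i _ => norm_nonneg _

theorem enorm_ZNintegrand {N : ℕ} (s : ℕ → ℕ → ℂ) {x : Tset N → ℚ_[p]} (hx : x ∈ ZNset p N) :
    ‖ZNintegrand p N s x‖ₑ = kobaNielsenWt (fun i => (s 1 i).re)
      (fun i => (s (N - 1) i).re) (fun i j => (s i j).re) (Tset N) (padicCoord x) := by
  simp only [ZNintegrand, kobaNielsenWt, pointWt, pairWt, enorm_mul, enorm_prod_complex,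
    ← Finset.prod_mul_distrib]
  congr 1
  · refine Finset.prod_congr rfl fun i hi => ?_
    have h := hx.1 ⟨i, hi⟩
    rw [← padicCoord_of_mem x hi] at h
    rw [enorm_ofReal_cpow h.1, enorm_ofReal_cpow (sub_ne_zero.2 h.2.symm), Pi.sub_apply,
      Pi.one_apply]
  · exact Finset.prod_congr rfl fun q hq => enorm_ofReal_cpow (sub_ne_zero.2 (hx.2 q hq)) _

theorem measurable_padicCoord_apply {J : Finset ℕ} (i : ℕ) :
    Measurable fun x : J → ℚ_[p] => padicCoord x i :=
  (measurable_pi_apply i).comp (measurable_padicCoord J)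

theorem measurable_ZNintegrand (N : ℕ) (s : ℕ → ℕ → ℂ) : Measurable (ZNintegrand p N s) := by
  have h := fun i => measurable_padicCoord_apply (p := p) (J := Tset N) i
  have hpow : ∀ {f : (Tset N → ℚ_[p]) → ℚ_[p]} (_ : Measurable f) (w : ℂ),
      Measurable fun x => (‖f x‖ : ℂ) ^ w := fun hf w =>
    (Complex.measurable_ofReal.comp hf.norm).pow_const w
  exact (Finset.measurable_prod _ fun i _ => (hpow (h i) _).mul
    (hpow (measurable_const.sub (h i)) _)).mul
    (Finset.measurable_prod _ fun q _ => hpow ((h q.1).sub (h q.2)) _)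

theorem measurableSet_ZNset (N : ℕ) : MeasurableSet (ZNset p N) := by
  have h := fun i => measurable_padicCoord_apply (p := p) (J := Tset N) i
  refine MeasurableSet.inter (s₁ := {x : Tset N → ℚ_[p] | ∀ i, x i ≠ 0 ∧ x i ≠ 1})
    (s₂ := {x : Tset N → ℚ_[p] | ∀ q ∈ pairsIn (Tset N), padicCoord x q.1 ≠ padicCoord x q.2})
    ?_ ?_
  · rw [Set.ofPred_forall]
    exact MeasurableSet.iInter fun i =>
      ((measurableSet_singleton 0).compl.preimage (measurable_pi_apply i)).inter
        ((measurableSet_singleton 1).compl.preimage (measurable_pi_apply i))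
  · simp only [Set.ofPred_forall]
    exact MeasurableSet.iInter fun q => MeasurableSet.iInter fun _ =>
      (measurableSet_eq_fun (h q.1) (h q.2)).compl

theorem integrableOn_ZNintegrand {N : ℕ} {s : ℕ → ℕ → ℂ} (hsym : ∀ i j, s i j = s j i)
    (hs : H0C N s) : IntegrableOn (ZNintegrand p N s) (ZNset p N) (padicPi p (Tset N)) := by
  refine ⟨(measurable_ZNintegrand N s).aestronglyMeasurable, ?_⟩
  rw [hasFiniteIntegral_iff_enorm,
    setLIntegral_congr_fun (measurableSet_ZNset N) fun x hx => enorm_ZNintegrand s hx]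
  exact (setLIntegral_le_lintegral _ _).trans_lt (coordLint_lt_top_of_H0C hsym hs)

end KobaNielsen

/-- For `s ∈ H₀(ℂ)`, the truncated integrals over the balls `B_r^{N-3}` converge, as
`r → ∞`, to the `p`-adic open string `N`-point zeta function `Z^{(N)}(s)`. -/
theorem ZN_ball_limit (p : ℕ) [Fact p.Prime] (N : ℕ) (hN : 4 ≤ N)
    (s : ℕ → ℕ → ℂ) (hsym : ∀ i j, s i j = s j i) (hs : H0C N s) :
    Filter.Tendsto
      (fun r : ℕ =>
        ∫ x in ZNset p N ∩ {x | ∀ i, ‖x i‖ ≤ (p : ℝ) ^ r},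
          ZNintegrand p N s x ∂(padicPi p ↥(Tset N)))
      Filter.atTop
      (nhds (∫ x in ZNset p N, ZNintegrand p N s x ∂(padicPi p ↥(Tset N)))) := by
  have hp : (1 : ℝ) < p := by exact_mod_cast (Fact.out : p.Prime).one_lt
  have hU : ⋃ r : ℕ, ZNset p N ∩ {x | ∀ i, ‖x i‖ ≤ (p : ℝ) ^ r} = ZNset p N := by
    rw [← Set.inter_iUnion, Set.inter_eq_left]
    intro x _
    obtain ⟨r, hr⟩ := pow_unbounded_of_one_lt ‖x‖ hp
    exact Set.mem_iUnion.2 ⟨r, fun i => (norm_le_pi_norm x i).trans hr.le⟩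
  have h := tendsto_setIntegral_of_monotone (μ := padicPi p ↥(Tset N))
    (f := ZNintegrand p N s)
    (s := fun r : ℕ => ZNset p N ∩ {x | ∀ i, ‖x i‖ ≤ (p : ℝ) ^ r})
    (fun r => (measurableSet_ZNset N).inter (by
      rw [Set.ofPred_forall]
      exact MeasurableSet.iInter fun i =>
        measurableSet_le (measurable_pi_apply i).norm measurable_const))
    (fun r r' hrr => Set.inter_subset_inter_right _ fun x hx i =>
      (hx i).trans (pow_le_pow_right₀ hp.le hrr))
    (by rw [hU]; exact integrableOn_ZNintegrand hsym hs)
  rwa [hU] at h
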